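/- Under the n-dimensional diagonal two-step trust-region setup, suppose x̃₁ ≠ x₁ and there are real numbers κ⁽¹⁾, …, κ⁽ⁿ⁾ with κ⁽ⁱ⁾ (x̃₁⁽ⁱ⁾ − x₁⁽ⁱ⁾) = x₁⁽ⁱ⁾ − x₀⁽ⁱ⁾ for every i. If −1 < κ⁽ⁱ⁾ < 0 for every i (equivalently, for each i, x̃₁⁽ⁱ⁾ ≤ x₀⁽ⁱ⁾ < x₁⁽ⁱ⁾ or x₁⁽ⁱ⁾ < x₀⁽ⁱ⁾ ≤ x̃₁⁽ⁱ⁾), then there does not exist an ε with 0 < ε < 1 such that ‖x̃₂ − x₂‖₂ ≤ ε ‖x̃₁ − x₁‖₂; that is, for every ε with 0 < ε < 1 one has ‖x̃₂ − x₂‖₂ > ε ‖x̃₁ − x₁‖₂ in the Euclidean norm. -/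

import Mathlib

lemma diag_inv_aux {n : ℕ} (a v : Fin n → ℝ) (w : ℝ) (h : ∀ i, a i + w ≠ 0) (i : Fin n) :
    (Matrix.diagonal a + w • (1 : Matrix (Fin n) (Fin n) ℝ))⁻¹.mulVec v i = v i / (a i + w) := by
  have h1 : (Matrix.diagonal a + w • (1 : Matrix (Fin n) (Fin n) ℝ))⁻¹
      = Matrix.diagonal (fun i => (a i + w)⁻¹) := by
    apply Matrix.inv_eq_right_inv
    rw [Matrix.smul_one_eq_diagonal, Matrix.diagonal_add, Matrix.diagonal_mul_diagonal,
      ← Matrix.diagonal_one]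
    congr 1
    funext j
    exact mul_inv_cancel₀ (h j)
  rw [h1, Matrix.mulVec_diagonal]
  field_simp

lemma step_aux {n : ℕ} (a g x y z : Fin n → ℝ) (w v : ℝ) (h : ∀ i, a i + w ≠ 0)
    (h2 : ∀ i, 0 < a i + v)
    (hy : y = x - (Matrix.diagonal a + w • 1)⁻¹.mulVec g)
    (hz : z = y - (Matrix.diagonal a + v • 1)⁻¹.mulVec (g + (Matrix.diagonal a).mulVec (y - x)))
    (i : Fin n) : z i = y i + w / (a i + v) * (y i - x i) := by
  have e1 := congrFun hy i
  have e2 := congrFun hz i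
  rw [Pi.sub_apply, diag_inv_aux a _ w h] at e1
  rw [Pi.sub_apply, diag_inv_aux a _ v (fun i => (h2 i).ne'), Pi.add_apply,
    Matrix.mulVec_diagonal, Pi.sub_apply] at e2
  have hg : g i = -(a i + w) * (y i - x i) := by
    rw [e1]
    have := h i
    field_simp
    ring
  rw [e2, hg]
  ring

/-- No contraction in the `n`-dimensional diagonal case when every `κ⁽ⁱ⁾ ∈ (−1, 0)`. -/
theorem stmt_8 (n : ℕ) (hn : 1 ≤ n) (a b : Fin n → ℝ) (gf gQ x₀ : Fin n → ℝ)
    (ω₁ ω₁t ω₂ ω₂t : ℝ)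
    (hω₁ : 0 < ω₁) (hω₁t : 0 < ω₁t) (hω₂ : 0 < ω₂) (hω₂t : 0 < ω₂t)
    (ha1 : ∀ i, a i + ω₁ ≠ 0) (hb1 : ∀ i, b i + ω₁t ≠ 0)
    (ha2 : ∀ i, 0 < a i + ω₂) (hb2 : ∀ i, 0 < b i + ω₂t)
    (x₁ x₁t x₂ x₂t : Fin n → ℝ)
    (hx₁ : x₁ = x₀ - (Matrix.diagonal a + ω₁ • 1)⁻¹.mulVec gf)
    (hx₁t : x₁t = x₀ - (Matrix.diagonal b + ω₁t • 1)⁻¹.mulVec gQ)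
    (hx₂ : x₂ = x₁ -
      (Matrix.diagonal a + ω₂ • 1)⁻¹.mulVec (gf + (Matrix.diagonal a).mulVec (x₁ - x₀)))
    (hx₂t : x₂t = x₁t -
      (Matrix.diagonal b + ω₂t • 1)⁻¹.mulVec (gQ + (Matrix.diagonal b).mulVec (x₁t - x₀)))
    (hne : x₁t ≠ x₁)
    (κ : Fin n → ℝ) (hκ : ∀ i, κ i * (x₁t i - x₁ i) = x₁ i - x₀ i)
    (hκneg : ∀ i, -1 < κ i) (hκ0 : ∀ i, κ i < 0) :
    ∀ ε : ℝ, 0 < ε → ε < 1 →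
      ε * ‖(WithLp.equiv 2 (Fin n → ℝ)).symm (x₁t - x₁)‖ <
        ‖(WithLp.equiv 2 (Fin n → ℝ)).symm (x₂t - x₂)‖ := by
  intro ε _ hε
  have hpos : 0 < ‖(WithLp.equiv 2 (Fin n → ℝ)).symm (x₁t - x₁)‖ := by
    rw [norm_pos_iff]
    intro h0
    apply hne
    funext i
    have h1 := congrArg (fun v : EuclideanSpace ℝ (Fin n) => v i) h0
    have h2 : x₁t i - x₁ i = 0 := h1
    linarith
  have hle : ‖(WithLp.equiv 2 (Fin n → ℝ)).symm (x₁t - x₁)‖ ≤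
      ‖(WithLp.equiv 2 (Fin n → ℝ)).symm (x₂t - x₂)‖ := by
    rw [EuclideanSpace.norm_eq, EuclideanSpace.norm_eq]
    apply Real.sqrt_le_sqrt
    apply Finset.sum_le_sum
    intro i _
    change ‖x₁t i - x₁ i‖ ^ 2 ≤ ‖x₂t i - x₂ i‖ ^ 2
    have e1 := step_aux a gf x₀ x₁ x₂ ω₁ ω₂ ha1 ha2 hx₁ hx₂ i
    have e2 := step_aux b gQ x₀ x₁t x₂t ω₁t ω₂t hb1 hb2 hx₁t hx₂t i
    have p1 : 0 < ω₁ / (a i + ω₂) := div_pos hω₁ (ha2 i)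
    have p2 : 0 < ω₁t / (b i + ω₂t) := div_pos hω₁t (hb2 i)
    have hc : x₂t i - x₂ i = (1 + ω₁t / (b i + ω₂t) * (1 + κ i) + ω₁ / (a i + ω₂) * (-κ i))
        * (x₁t i - x₁ i) := by
      rw [e1, e2]
      linear_combination (ω₁ / (a i + ω₂) - ω₁t / (b i + ω₂t)) * hκ i
    have q1 : 0 ≤ ω₁t / (b i + ω₂t) * (1 + κ i) :=
      mul_nonneg p2.le (by linarith [hκneg i])
    have q2 : 0 ≤ ω₁ / (a i + ω₂) * (-κ i) := mul_nonneg p1.le (by linarith [hκ0 i])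
    rw [hc, norm_mul]
    refine pow_le_pow_left₀ (norm_nonneg _) ?_ 2
    apply le_mul_of_one_le_left (norm_nonneg _)
    rw [Real.norm_eq_abs]
    exact le_trans (by linarith) (le_abs_self _)
  nlinarith
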